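/- Let f : A → B be a morphism of DGAs over ℚ (a degree-preserving unital algebra homomorphism commuting with the differentials) such that H³(A) = H³(B) = 0 and the induced map H²(f) : H²(A) → H²(B) is an isomorphism. Then the well-defined pentagonal Massey tensors 𝒫_A : D_A → H⁸(A) and 𝒫_B : D_B → H⁸(B) (which are independent of cochain choices since H³ vanishes) satisfy H⁸(f) ∘ 𝒫_A = 𝒫_B ∘ (D_A → D_B), where D_A → D_B is the restriction of H²(f) ⊗ Λ²(P²H²(f)). In particular, if f is a quasi-isomorphism, 𝒫 is a quasi-isomorphism invariant and hence an obstruction to formality. -/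

import Mathlib

/-!
Common constructions: for a `ℚ`-vector space `V`, the symmetric powers
`P²V, P³V, P⁴V, P⁵V` (as `SqM V`, `CubM V`, `QuarM V`, `QuinM V`), built as iterated
quotients of tensor products, with the multiplication maps between them; the exterior
square `Λ²W` (as `AltM W`) with the wedge map; and the 5-linear map `⋆` (as `star5`).
-/

open TensorProduct

noncomputable section

variable (V W : Type) [AddCommGroup V] [Module ℚ V] [AddCommGroup W] [Module ℚ W]

/-- The relations defining the symmetric square `P²V` as a quotient of `V ⊗ V`. -/
def sqRel : Submodule ℚ (V ⊗[ℚ] V) :=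
  Submodule.span ℚ {z | ∃ x y : V, z = x ⊗ₜ[ℚ] y - y ⊗ₜ[ℚ] x}

/-- The symmetric square `P²V`. -/
abbrev SqM : Type := (V ⊗[ℚ] V) ⧸ sqRel V

/-- The product `V × V → P²V`, `(x, y) ↦ xy`. -/
def sqm : V →ₗ[ℚ] V →ₗ[ℚ] SqM V :=
  (TensorProduct.mk ℚ V V).compr₂ (sqRel V).mkQ

/-- The relations presenting the symmetric cube `P³V` as a quotient of `V ⊗ P²V`. -/
def cubRel : Submodule ℚ (V ⊗[ℚ] SqM V) :=
  Submodule.span ℚ {z | ∃ x y w : V, z = x ⊗ₜ[ℚ] sqm V y w - y ⊗ₜ[ℚ] sqm V x w}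

/-- The symmetric cube `P³V`. -/
abbrev CubM : Type := (V ⊗[ℚ] SqM V) ⧸ cubRel V

/-- The product `V × P²V → P³V`. -/
def mulC : V →ₗ[ℚ] SqM V →ₗ[ℚ] CubM V :=
  (TensorProduct.mk ℚ V (SqM V)).compr₂ (cubRel V).mkQ

/-- The relations presenting `P⁴V` as a quotient of `V ⊗ P³V`. -/
def quarRel : Submodule ℚ (V ⊗[ℚ] CubM V) :=
  Submodule.span ℚ {z | ∃ (x y : V) (u : SqM V), z = x ⊗ₜ[ℚ] mulC V y u - y ⊗ₜ[ℚ] mulC V x u}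

/-- The symmetric fourth power `P⁴V`. -/
abbrev QuarM : Type := (V ⊗[ℚ] CubM V) ⧸ quarRel V

/-- The product `V × P³V → P⁴V`. -/
def mulQ : V →ₗ[ℚ] CubM V →ₗ[ℚ] QuarM V :=
  (TensorProduct.mk ℚ V (CubM V)).compr₂ (quarRel V).mkQ

/-- The relations presenting `P⁵V` as a quotient of `V ⊗ P⁴V`. -/
def quinRel : Submodule ℚ (V ⊗[ℚ] QuarM V) :=
  Submodule.span ℚ {z | ∃ (x y : V) (c : CubM V), z = x ⊗ₜ[ℚ] mulQ V y c - y ⊗ₜ[ℚ] mulQ V x c}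

/-- The symmetric fifth power `P⁵V`. -/
abbrev QuinM : Type := (V ⊗[ℚ] QuarM V) ⧸ quinRel V

/-- The product `V × P⁴V → P⁵V`. -/
def mulQn : V →ₗ[ℚ] QuarM V →ₗ[ℚ] QuinM V :=
  (TensorProduct.mk ℚ V (QuarM V)).compr₂ (quinRel V).mkQ

/-- The relations defining the exterior square `Λ²W` as a quotient of `W ⊗ W`. -/
def altRel2 : Submodule ℚ (W ⊗[ℚ] W) :=
  Submodule.span ℚ {z | ∃ x : W, z = x ⊗ₜ[ℚ] x}

/-- The exterior square `Λ²W`. -/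
abbrev AltM : Type := (W ⊗[ℚ] W) ⧸ altRel2 W

/-- The wedge product `W × W → Λ²W`. -/
def wdg : W →ₗ[ℚ] W →ₗ[ℚ] AltM W :=
  (TensorProduct.mk ℚ W W).compr₂ (altRel2 W).mkQ

/-- The element `⋆(x₁,…,x₅) = Σ_{i ∈ ℤ/5} xᵢ ⊗ (x_{i+1}x_{i+2} ∧ x_{i+3}x_{i+4})`
of `V ⊗ Λ²(P²V)`. -/
def star5 (x₁ x₂ x₃ x₄ x₅ : V) : V ⊗[ℚ] AltM (SqM V) :=
    x₁ ⊗ₜ[ℚ] wdg (SqM V) (sqm V x₂ x₃) (sqm V x₄ x₅)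
  + x₂ ⊗ₜ[ℚ] wdg (SqM V) (sqm V x₃ x₄) (sqm V x₅ x₁)
  + x₃ ⊗ₜ[ℚ] wdg (SqM V) (sqm V x₄ x₅) (sqm V x₁ x₂)
  + x₄ ⊗ₜ[ℚ] wdg (SqM V) (sqm V x₅ x₁) (sqm V x₂ x₃)
  + x₅ ⊗ₜ[ℚ] wdg (SqM V) (sqm V x₁ x₂) (sqm V x₃ x₄)

/-- A differential graded algebra (DGA) over `ℚ`: an `ℕ`-graded, graded-commutative,
associative unital `ℚ`-algebra with a degree `+1` differential satisfying `d ∘ d = 0`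
and the graded Leibniz rule. -/
structure DGA where
  /-- The underlying type. -/
  carrier : Type
  [ringStr : Ring carrier]
  [algStr : Algebra ℚ carrier]
  /-- The grading `A = ⊕ᵢ Aⁱ`. -/
  grading : ℕ → Submodule ℚ carrier
  one_mem : (1 : carrier) ∈ grading 0
  mul_mem : ∀ {i j : ℕ} {a b : carrier}, a ∈ grading i → b ∈ grading j → a * b ∈ grading (i + j)
  /-- The grading really is a direct sum decomposition. -/
  internal : DirectSum.IsInternal grading
  /-- Graded commutativity. -/
  gcomm : ∀ {i j : ℕ} {a b : carrier}, a ∈ grading i → b ∈ grading j →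
    a * b = ((-1 : ℚ) ^ (i * j)) • (b * a)
  /-- The differential. -/
  d : carrier →ₗ[ℚ] carrier
  d_mem : ∀ {i : ℕ} {a : carrier}, a ∈ grading i → d a ∈ grading (i + 1)
  d_d : ∀ a : carrier, d (d a) = 0
  /-- The graded Leibniz rule. -/
  leibniz : ∀ {i : ℕ} {a : carrier} (b : carrier), a ∈ grading i →
    d (a * b) = d a * b + ((-1 : ℚ) ^ i) • (a * d b)

attribute [instance] DGA.ringStr DGA.algStr

namespace DGA

variable (A : DGA)

/-- The closed elements of degree `i`. -/
def Z (i : ℕ) : Submodule ℚ A.carrier := A.grading i ⊓ LinearMap.ker A.d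

/-- The exact elements of degree `i`, as a submodule of the closed ones. -/
def Bdry (i : ℕ) : Submodule ℚ (A.Z i) :=
  Submodule.comap (A.Z i).subtype (Submodule.map A.d (A.grading (i - 1)))

/-- Degree `i` cohomology of the DGA. -/
abbrev H (i : ℕ) : Type := A.Z i ⧸ A.Bdry i

/-- The projection from closed elements to cohomology classes. -/
def pr (i : ℕ) : A.Z i →ₗ[ℚ] A.H i := (A.Bdry i).mkQ

end DGA

/-!
Fix linear cocycle representatives `α` and primitives `γ` of `α²`. Replacing `γ` by another
primitive changes it by `dζ`, because `H³ = 0`, and changes `α(q)γ(e)γ(e')` by an exact element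
plus an expression in `α` and `ζ` which factors through `m`, hence vanishes on `D`. Replacing `α`
by `α + dβ` is done along the path `α + s dβ`, whose squares have primitives `γ_s` quadratic in
`s`. The Massey tensor of `(α + s dβ, γ_s)` is then a polynomial in `s` whose derivative, on `D`,
takes exact values at every rational `s`; so all its coefficients of positive degree are exact, and
its values at `0` and `1` differ by an exact element. Hence on `D` the class only depends on `[α]`.
For naturality, push the choice on `A` forward along `f`, pull the choice on `B` back along
`H²(f)`, and compare the two resulting choices in `B`.
-/

section PolynomialCurves

open Polynomial

variable {K R : Type*} [Field K] [Ring R] [Algebra K R]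

/-- Evaluation of a polynomial over a possibly noncommutative `K`-algebra at a scalar of `K`;
since scalars are central, it is an algebra homomorphism. -/
def evalScalar (s : K) : R[X] →ₐ[K] R :=
  eval₂AlgHom (AlgHom.id K R) (algebraMap K R s) fun a => (Algebra.commutes s a).symm

theorem evalScalar_monomial (s : K) (n : ℕ) (a : R) :
    evalScalar s (monomial n a) = s ^ n • a :=
  (eval₂_monomial _ _).trans <| by rw [← map_pow, ← Algebra.commutes, ← Algebra.smul_def]; rfl

theorem evalScalar_eq_sum (s : K) (p : R[X]) :
    evalScalar s p = ∑ n ∈ Finset.range (p.natDegree + 1), s ^ n • p.coeff n := by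
  conv_lhs => rw [p.as_sum_range]
  simp only [map_sum, evalScalar_monomial]

/-- A linear functional vanishing on `N` turns `p` into a polynomial over `K` with infinitely many
roots. -/
theorem coeff_mem_of_forall_evalScalar_mem [Infinite K] {N : Submodule K R} {p : R[X]}
    (h : ∀ s : K, evalScalar s p ∈ N) (n : ℕ) : p.coeff n ∈ N := by
  by_contra hn
  obtain ⟨φ, hφn, hφN⟩ := Submodule.exists_le_ker_of_notMem hn
  let q : K[X] := ∑ i ∈ Finset.range (p.natDegree + 1), monomial i (φ (p.coeff i))
  have hq : q = 0 := Polynomial.funext fun s => by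
    have hs : φ (evalScalar s p) = 0 := hφN (h s)
    simpa [q, evalScalar_eq_sum, eval_finsetSum, eval_monomial, mul_comm] using hs
  have hqn : q.coeff n = φ (p.coeff n) := by
    simp only [q, finsetSum_coeff, coeff_monomial, Finset.sum_ite_eq', Finset.mem_range,
      Nat.lt_succ_iff, ite_eq_left_iff, not_le]
    intro hlt
    rw [coeff_eq_zero_of_natDegree_lt hlt, map_zero]
  exact hφn (by rw [← hqn, hq, coeff_zero])

theorem evalScalar_one_sub_evalScalar_zero_mem [CharZero K] {N : Submodule K R} {p : R[X]}
    (h : ∀ s : K, evalScalar s (derivative p) ∈ N) :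
    evalScalar (1 : K) p - evalScalar (0 : K) p ∈ N := by
  have hcoeff (n : ℕ) : p.coeff (n + 1) ∈ N := by
    have hn := coeff_mem_of_forall_evalScalar_mem h n
    rw [coeff_derivative, ← Nat.cast_succ, ← nsmul_eq_mul', ← Nat.cast_smul_eq_nsmul K] at hn
    exact (N.smul_mem_iff (Nat.cast_ne_zero.2 n.succ_ne_zero)).1 hn
  have hsub : evalScalar (1 : K) p - evalScalar (0 : K) p
      = ∑ n ∈ Finset.range p.natDegree, p.coeff (n + 1) := by
    simp [evalScalar_eq_sum, Finset.sum_range_succ']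
  exact hsub ▸ N.sum_mem fun n _ => hcoeff n

variable {M : Type*} [AddCommGroup M] [Module K M]

/-- The quadratic curve of linear maps `t ↦ a + t b + t² c`, with values in `R[t]`. -/
def quadraticCurve (a b c : M →ₗ[K] R) : M →ₗ[K] R[X] :=
  (monomial 0).restrictScalars K ∘ₗ a + (monomial 1).restrictScalars K ∘ₗ b
    + (monomial 2).restrictScalars K ∘ₗ c

theorem quadraticCurve_apply (a b c : M →ₗ[K] R) (x : M) :
    quadraticCurve a b c x = monomial 0 (a x) + monomial 1 (b x) + monomial 2 (c x) :=
  rfl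

theorem evalScalar_quadraticCurve (a b c : M →ₗ[K] R) (s : K) (x : M) :
    evalScalar s (quadraticCurve a b c x) = a x + s • b x + s ^ 2 • c x := by
  simp only [quadraticCurve_apply, map_add, evalScalar_monomial, pow_zero, pow_one, one_smul]

theorem evalScalar_derivative_quadraticCurve (a b c : M →ₗ[K] R) (s : K) (x : M) :
    evalScalar s (derivative (quadraticCurve a b c x)) = b x + (2 * s) • c x := by
  simp only [quadraticCurve_apply, map_add, derivative_monomial, evalScalar_monomial,
    ← nsmul_eq_mul', ← Nat.cast_smul_eq_nsmul K, smul_smul]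
  norm_num [mul_comm]

theorem coeff_quadraticCurve_mem {a b c : M →ₗ[K] R} {G : Submodule K R} {x : M}
    (ha : a x ∈ G) (hb : b x ∈ G) (hc : c x ∈ G) (n : ℕ) :
    (quadraticCurve a b c x).coeff n ∈ G := by
  simp only [quadraticCurve_apply, coeff_add, coeff_monomial]
  refine G.add_mem (G.add_mem ?_ ?_) ?_ <;> split_ifs <;> first | assumption | exact G.zero_mem

end PolynomialCurves

section SymmetricAndExteriorPowers

variable {V W} {U : Type} [AddCommGroup U] [Module ℚ U]
  {M : Type*} [AddCommGroup M] [Module ℚ M]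

theorem sqm_comm (x y : V) : sqm V x y = sqm V y x :=
  (Submodule.Quotient.eq _).2 (Submodule.subset_span ⟨x, y, rfl⟩)

theorem sqm_hom_ext {g h : SqM V →ₗ[ℚ] M} (H : ∀ x y, g (sqm V x y) = h (sqm V x y)) : g = h :=
  Submodule.linearMap_qext _ (TensorProduct.ext' H)

/-- The map out of `P²V` induced by a symmetric bilinear map. -/
def sqLift (b : V →ₗ[ℚ] V →ₗ[ℚ] M) (hb : ∀ x y, b x y = b y x) : SqM V →ₗ[ℚ] M :=
  (sqRel V).liftQ (TensorProduct.lift b) <| Submodule.span_le.2 <| by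
    rintro _ ⟨x, y, rfl⟩
    simp [hb x y]

@[simp]
theorem sqLift_sqm (b : V →ₗ[ℚ] V →ₗ[ℚ] M) (hb : ∀ x y, b x y = b y x) (x y : V) :
    sqLift b hb (sqm V x y) = b x y :=
  TensorProduct.lift.tmul x y

/-- The functoriality `P²φ : P²V → P²W` of the symmetric square. -/
def sqMap (φ : V →ₗ[ℚ] W) : SqM V →ₗ[ℚ] SqM W :=
  sqLift ((sqm W).compl₁₂ φ φ) fun x y => sqm_comm (φ x) (φ y)

@[simp]
theorem sqMap_sqm (φ : V →ₗ[ℚ] W) (x y : V) :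
    sqMap φ (sqm V x y) = sqm W (φ x) (φ y) :=
  sqLift_sqm _ _ x y

/-- The map out of `P³V` induced by a bilinear map `b : V × P²V → M` such that `b(x, yw)` is
symmetric in `x` and `y`. -/
def cubLift (b : V →ₗ[ℚ] SqM V →ₗ[ℚ] M)
    (hb : ∀ x y w, b x (sqm V y w) = b y (sqm V x w)) : CubM V →ₗ[ℚ] M :=
  (cubRel V).liftQ (TensorProduct.lift b) <| Submodule.span_le.2 <| by
    rintro _ ⟨x, y, w, rfl⟩
    simp [hb x y w]

@[simp]
theorem cubLift_mulC (b : V →ₗ[ℚ] SqM V →ₗ[ℚ] M)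
    (hb : ∀ x y w, b x (sqm V y w) = b y (sqm V x w)) (x : V) (u : SqM V) :
    cubLift b hb (mulC V x u) = b x u :=
  TensorProduct.lift.tmul x u

theorem wdg_self (x : W) : wdg W x x = 0 :=
  (Submodule.Quotient.mk_eq_zero _).2 (Submodule.subset_span ⟨x, rfl⟩)

theorem tmul_wdg_hom_ext {g h : V ⊗[ℚ] AltM W →ₗ[ℚ] M}
    (H : ∀ q x y, g (q ⊗ₜ wdg W x y) = h (q ⊗ₜ wdg W x y)) : g = h :=
  TensorProduct.ext <| LinearMap.ext fun q =>
    Submodule.linearMap_qext _ (TensorProduct.ext' fun x y => H q x y)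

theorem mem_of_forall_tmul_wdg_mem {N : Submodule ℚ M} {g : V ⊗[ℚ] AltM W →ₗ[ℚ] M}
    (H : ∀ q x y, g (q ⊗ₜ wdg W x y) ∈ N) (t : V ⊗[ℚ] AltM W) : g t ∈ N := by
  have hg : N.mkQ ∘ₗ g = 0 := tmul_wdg_hom_ext fun q x y =>
    (Submodule.Quotient.mk_eq_zero N).2 (H q x y)
  exact (Submodule.Quotient.mk_eq_zero N).1 (LinearMap.congr_fun hg t)

/-- The map out of `Λ²W` induced by an alternating bilinear map. -/
def altLift (b : W →ₗ[ℚ] W →ₗ[ℚ] M) (hb : ∀ x, b x x = 0) : AltM W →ₗ[ℚ] M :=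
  (altRel2 W).liftQ (TensorProduct.lift b) <| Submodule.span_le.2 <| by
    rintro _ ⟨x, rfl⟩
    simp [hb x]

@[simp]
theorem altLift_wdg (b : W →ₗ[ℚ] W →ₗ[ℚ] M) (hb : ∀ x, b x x = 0) (x y : W) :
    altLift b hb (wdg W x y) = b x y :=
  TensorProduct.lift.tmul x y

/-- The functoriality `Λ²φ : Λ²V → Λ²W` of the exterior square. -/
def altMap (φ : V →ₗ[ℚ] W) : AltM V →ₗ[ℚ] AltM W :=
  altLift ((wdg W).compl₁₂ φ φ) fun x => wdg_self (φ x)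

@[simp]
theorem altMap_wdg (φ : V →ₗ[ℚ] W) (x y : V) :
    altMap φ (wdg V x y) = wdg W (φ x) (φ y) :=
  altLift_wdg _ _ x y

theorem altMap_injective {φ : V →ₗ[ℚ] W} (hφ : Function.Injective φ) :
    Function.Injective (altMap φ) := by
  obtain ⟨ψ, hψ⟩ := φ.exists_leftInverse_of_injective (LinearMap.ker_eq_bot.2 hφ)
  have hψφ (x : V) : ψ (φ x) = x := LinearMap.congr_fun hψ x
  have hinv : altMap ψ ∘ₗ altMap φ = LinearMap.id :=
    Submodule.linearMap_qext _ <| TensorProduct.ext' fun x y => by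
      change altMap ψ (altMap φ (wdg V x y)) = wdg V x y
      rw [altMap_wdg, altMap_wdg, hψφ, hψφ]
  exact Function.LeftInverse.injective (LinearMap.congr_fun hinv)

theorem lTensor_altMap_injective {φ : V →ₗ[ℚ] W} (hφ : Function.Injective φ) :
    Function.Injective ((altMap φ).lTensor U) :=
  Module.Flat.lTensor_preserves_injective_linearMap _ (altMap_injective hφ)

theorem lTensor_eq_of_forall_tmul_wdg {φ : V →ₗ[ℚ] W}
    {ι : U ⊗[ℚ] AltM V →ₗ[ℚ] U ⊗[ℚ] AltM W}
    (hι : ∀ q x y, ι (q ⊗ₜ wdg V x y) = q ⊗ₜ wdg W (φ x) (φ y)) :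
    ι = (altMap φ).lTensor U :=
  tmul_wdg_hom_ext fun q x y => by rw [hι, LinearMap.lTensor_tmul, altMap_wdg]

theorem tmul_wdg_sqm_hom_ext {g h : U ⊗[ℚ] AltM (SqM V) →ₗ[ℚ] M}
    (H : ∀ q x y z w, g (q ⊗ₜ wdg (SqM V) (sqm V x y) (sqm V z w))
      = h (q ⊗ₜ wdg (SqM V) (sqm V x y) (sqm V z w))) : g = h := by
  refine tmul_wdg_hom_ext fun q u v => ?_
  have hright (x y : V) : (g ∘ₗ TensorProduct.mk ℚ _ _ q) ∘ₗ wdg (SqM V) (sqm V x y)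
      = (h ∘ₗ TensorProduct.mk ℚ _ _ q) ∘ₗ wdg (SqM V) (sqm V x y) :=
    sqm_hom_ext fun z w => H q x y z w
  have hleft : (g ∘ₗ TensorProduct.mk ℚ _ _ q) ∘ₗ (wdg (SqM V)).flip v
      = (h ∘ₗ TensorProduct.mk ℚ _ _ q) ∘ₗ (wdg (SqM V)).flip v :=
    sqm_hom_ext fun x y => LinearMap.congr_fun (hright x y) v
  exact LinearMap.congr_fun hleft u

theorem eq_map_altMap_restrict_of_apply_eq {φ : V →ₗ[ℚ] W} {E : Submodule ℚ (SqM V)}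
    {E' : Submodule ℚ (SqM W)} (hφ : ∀ u ∈ E, sqMap φ u ∈ E')
    {ι : V ⊗[ℚ] AltM E →ₗ[ℚ] V ⊗[ℚ] AltM (SqM V)}
    (hι : ∀ q (e e' : E), ι (q ⊗ₜ wdg E e e') = q ⊗ₜ wdg (SqM V) (e : SqM V) (e' : SqM V))
    {ι' : W ⊗[ℚ] AltM E' →ₗ[ℚ] W ⊗[ℚ] AltM (SqM W)}
    (hι' : ∀ q (e e' : E'), ι' (q ⊗ₜ wdg E' e e') = q ⊗ₜ wdg (SqM W) (e : SqM W) (e' : SqM W))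
    {F : V ⊗[ℚ] AltM (SqM V) →ₗ[ℚ] W ⊗[ℚ] AltM (SqM W)}
    (hF : ∀ q x y z w, F (q ⊗ₜ wdg (SqM V) (sqm V x y) (sqm V z w))
      = φ q ⊗ₜ wdg (SqM W) (sqm W (φ x) (φ y)) (sqm W (φ z) (φ w)))
    {t : V ⊗[ℚ] AltM E} {t' : W ⊗[ℚ] AltM E'} (h : ι' t' = F (ι t)) :
    t' = TensorProduct.map φ (altMap ((sqMap φ).restrict hφ)) t := by
  have hFmap : F = TensorProduct.map φ (altMap (sqMap φ)) :=
    tmul_wdg_sqm_hom_ext fun q x y z w => by simp [hF]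
  have hsquare : F ∘ₗ ι = ι' ∘ₗ TensorProduct.map φ (altMap ((sqMap φ).restrict hφ)) :=
    tmul_wdg_hom_ext fun q e e' => by simp [hι, hι', hFmap]
  have hinj : Function.Injective ι' :=
    lTensor_eq_of_forall_tmul_wdg (φ := E'.subtype) hι' ▸
      lTensor_altMap_injective E'.injective_subtype
  exact hinj (h.trans (LinearMap.congr_fun hsquare t))

end SymmetricAndExteriorPowers

section PentagonDomain

variable {V W}

/-- The embedding `Λ²W → W ⊗ W`, `x ∧ y ↦ x ⊗ y - y ⊗ x`. -/
def wedgeToTensor : AltM W →ₗ[ℚ] W ⊗[ℚ] W :=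
  altLift (TensorProduct.mk ℚ W W - (TensorProduct.mk ℚ W W).flip) fun x => sub_self (x ⊗ₜ[ℚ] x)

variable (V) in
/-- The map `m : V ⊗ Λ²(P²V) → P³V ⊗ P²V`, `q ⊗ (u ∧ v) ↦ qu ⊗ v - qv ⊗ u`. -/
def mulWedge : V ⊗[ℚ] AltM (SqM V) →ₗ[ℚ] CubM V ⊗[ℚ] SqM V :=
  (TensorProduct.lift (mulC V)).rTensor (SqM V) ∘ₗ
    (TensorProduct.assoc ℚ V (SqM V) (SqM V)).symm.toLinearMap ∘ₗ wedgeToTensor.lTensor V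

theorem mulWedge_tmul_wdg (q : V) (u v : SqM V) :
    mulWedge V (q ⊗ₜ wdg (SqM V) u v) = mulC V q u ⊗ₜ v - mulC V q v ⊗ₜ u := by
  have hskew : wedgeToTensor (wdg (SqM V) u v) = u ⊗ₜ[ℚ] v - v ⊗ₜ[ℚ] u := altLift_wdg _ _ u v
  simp [mulWedge, hskew, TensorProduct.tmul_sub]

/-- The space `D = (V ⊗ Λ²E) ∩ ker m`, as a subspace of `V ⊗ Λ²E`. -/
def pentagonDomain (E : Submodule ℚ (SqM V)) : Submodule ℚ (V ⊗[ℚ] AltM E) :=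
  LinearMap.ker (mulWedge V ∘ₗ (altMap E.subtype).lTensor V)

theorem mem_pentagonDomain_iff {E : Submodule ℚ (SqM V)}
    {m : V ⊗[ℚ] AltM (SqM V) →ₗ[ℚ] CubM V ⊗[ℚ] SqM V}
    (hm : ∀ q u v, m (q ⊗ₜ wdg (SqM V) u v) = mulC V q u ⊗ₜ v - mulC V q v ⊗ₜ u)
    {ι : V ⊗[ℚ] AltM E →ₗ[ℚ] V ⊗[ℚ] AltM (SqM V)}
    (hι : ∀ q (e e' : E), ι (q ⊗ₜ wdg E e e') = q ⊗ₜ wdg (SqM V) (e : SqM V) (e' : SqM V))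
    {t : V ⊗[ℚ] AltM E} : t ∈ pentagonDomain E ↔ m (ι t) = 0 := by
  have hmul : m = mulWedge V :=
    tmul_wdg_hom_ext fun q u v => (hm q u v).trans (mulWedge_tmul_wdg q u v).symm
  have hincl : ι = (altMap E.subtype).lTensor V := lTensor_eq_of_forall_tmul_wdg hι
  rw [pentagonDomain, LinearMap.mem_ker, LinearMap.comp_apply, hmul, hincl]

variable {R : Type*} [Ring R] [Algebra ℚ R]

/-- The map `q ⊗ (e ∧ e') ↦ a(q) b(e) b(e')` into an algebra in which the values of `b` square to
zero. -/
def mulAlt (a : V →ₗ[ℚ] R) (b : W →ₗ[ℚ] R) (hb : ∀ e, b e * b e = 0) :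
    V ⊗[ℚ] AltM W →ₗ[ℚ] R :=
  LinearMap.mul' ℚ R ∘ₗ TensorProduct.map a (altLift ((LinearMap.mul ℚ R).compl₁₂ b b) hb)

theorem mulAlt_tmul_wdg (a : V →ₗ[ℚ] R) (b : W →ₗ[ℚ] R) (hb : ∀ e, b e * b e = 0) (q : V)
    (e e' : W) : mulAlt a b hb (q ⊗ₜ wdg W e e') = a q * (b e * b e') :=
  congrArg (a q * ·) (altLift_wdg _ hb e e')

/-- On `D`, a map that factors through `m` vanishes. -/
theorem apply_mem_of_mem_pentagonDomain {E : Submodule ℚ (SqM V)} {N : Submodule ℚ R}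
    {L : V ⊗[ℚ] AltM E →ₗ[ℚ] R} (θ : CubM V →ₗ[ℚ] R) (ζ : E →ₗ[ℚ] R)
    (hL : ∀ q e e', L (q ⊗ₜ wdg E e e') - (θ (mulC V q e) * ζ e' - θ (mulC V q e') * ζ e) ∈ N)
    {t : V ⊗[ℚ] AltM E} (ht : t ∈ pentagonDomain E) : L t ∈ N := by
  obtain ⟨ζ', hζ'⟩ := LinearMap.exists_extend ζ
  have hext (e : E) : ζ' e = ζ e := LinearMap.congr_fun hζ' e
  let T : V ⊗[ℚ] AltM E →ₗ[ℚ] R := (LinearMap.mul' ℚ R ∘ₗ TensorProduct.map θ ζ') ∘ₗ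
    mulWedge V ∘ₗ (altMap E.subtype).lTensor V
  have hT (q : V) (e e' : E) :
      T (q ⊗ₜ wdg E e e') = θ (mulC V q e) * ζ e' - θ (mulC V q e') * ζ e := by
    simp only [T, LinearMap.comp_apply, LinearMap.lTensor_tmul, altMap_wdg, mulWedge_tmul_wdg,
      map_sub, TensorProduct.map_tmul, LinearMap.mul'_apply, Submodule.subtype_apply, hext]
  have hTt : T t = 0 := by
    change (LinearMap.mul' ℚ R ∘ₗ TensorProduct.map θ ζ')
      ((mulWedge V ∘ₗ (altMap E.subtype).lTensor V) t) = 0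
    rw [LinearMap.mem_ker.1 ht, map_zero]
  have hmem : (L - T) t ∈ N :=
    mem_of_forall_tmul_wdg_mem (fun q e e' => by rw [LinearMap.sub_apply, hT]; exact hL q e e') t
  rwa [LinearMap.sub_apply, hTt, sub_zero] at hmem

end PentagonDomain

namespace DGA

open Polynomial

variable {A B : DGA} {i j : ℕ} {a b : A.carrier}

theorem mul_comm_of_even (hi : Even i) (ha : a ∈ A.grading i) (hb : b ∈ A.grading j) :
    a * b = b * a := by
  rw [A.gcomm ha hb, (hi.mul_right j).neg_one_pow, one_smul]

theorem mul_anticomm_of_odd (hi : Odd i) (hj : Odd j) (ha : a ∈ A.grading i)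
    (hb : b ∈ A.grading j) : a * b = -(b * a) := by
  rw [A.gcomm ha hb, (hi.mul hj).neg_one_pow, neg_one_smul]

theorem mul_self_eq_zero_of_odd (hi : Odd i) (ha : a ∈ A.grading i) : a * a = 0 :=
  have : IsAddTorsionFree A.carrier := .of_module_rat _
  self_eq_neg.1 (mul_anticomm_of_odd hi hi ha ha)

theorem polynomial_mul_self_eq_zero_of_odd (hi : Odd i) {p : A.carrier[X]}
    (hp : ∀ n, p.coeff n ∈ A.grading i) : p * p = 0 := by
  have : IsAddTorsionFree A.carrier := .of_module_rat _
  ext n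
  rw [coeff_mul, coeff_zero]
  refine self_eq_neg.1 ?_
  conv_lhs => rw [← Finset.Nat.sum_antidiagonal_swap]
  rw [← Finset.sum_neg_distrib]
  exact Finset.sum_congr rfl fun x _ => mul_anticomm_of_odd hi hi (hp _) (hp _)

theorem d_mul_of_even (hi : Even i) (ha : a ∈ A.grading i) :
    A.d (a * b) = A.d a * b + a * A.d b := by
  rw [A.leibniz b ha, hi.neg_one_pow, one_smul]

theorem d_mul_of_odd (hi : Odd i) (ha : a ∈ A.grading i) :
    A.d (a * b) = A.d a * b - a * A.d b := by
  rw [A.leibniz b ha, hi.neg_one_pow, neg_one_smul, sub_eq_add_neg]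

@[simp]
theorem d_Z (z : A.Z i) : A.d z = 0 :=
  z.2.2

theorem d_mem_Z (ha : a ∈ A.grading i) : A.d a ∈ A.Z (i + 1) :=
  ⟨A.d_mem ha, A.d_d a⟩

theorem mul_mem_Z (ha : a ∈ A.Z i) (hb : b ∈ A.Z j) : a * b ∈ A.Z (i + j) := by
  refine ⟨A.mul_mem ha.1 hb.1, LinearMap.mem_ker.2 ?_⟩
  rw [A.leibniz b ha.1, LinearMap.mem_ker.1 ha.2, LinearMap.mem_ker.1 hb.2,
    zero_mul, mul_zero, smul_zero, add_zero]

theorem pr_eq_zero_iff (z : A.Z i) :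
    A.pr i z = 0 ↔ (z : A.carrier) ∈ (A.grading (i - 1)).map A.d :=
  Submodule.Quotient.mk_eq_zero _

theorem mem_map_d_of_H_eq_zero (h : ∀ x : A.H (i + 1), x = 0) (ha : a ∈ A.Z (i + 1)) :
    a ∈ (A.grading i).map A.d :=
  (pr_eq_zero_iff ⟨a, ha⟩).1 (h _)

theorem exists_linear_primitive {M : Type*} [AddCommGroup M] [Module ℚ M] (L : M →ₗ[ℚ] A.carrier)
    (hL : ∀ x, L x ∈ (A.grading i).map A.d) :
    ∃ β : M →ₗ[ℚ] A.grading i, ∀ x, A.d (β x) = L x := by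
  obtain ⟨s, hs⟩ := (A.d.submoduleMap (A.grading i)).exists_rightInverse_of_surjective
    (LinearMap.range_eq_top.2 (A.d.submoduleMap_surjective _))
  refine ⟨s ∘ₗ L.codRestrict _ hL, fun x => ?_⟩
  exact congrArg Subtype.val (LinearMap.congr_fun hs (L.codRestrict _ hL x))

variable {V W}

/-- The coboundary of a linear family of elements of degree `1`. -/
def coboundary (β : V →ₗ[ℚ] A.grading 1) : V →ₗ[ℚ] A.Z 2 :=
  A.d.restrict (fun _ => d_mem_Z) ∘ₗ β

@[simp]
theorem coe_coboundary (β : V →ₗ[ℚ] A.grading 1) (x : V) :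
    (coboundary β x : A.carrier) = A.d (β x) :=
  rfl

/-- The map `α² : P²V → Z⁴`, `xy ↦ α(x)α(y)`. -/
def cupSq (α : V →ₗ[ℚ] A.Z 2) : SqM V →ₗ[ℚ] A.Z 4 :=
  sqLift
    (LinearMap.mk₂ ℚ (fun x y => ⟨α x * α y, mul_mem_Z (α x).2 (α y).2⟩)
      (fun _ _ _ => Subtype.ext <| by simp [add_mul]) (fun _ _ _ => Subtype.ext <| by simp)
      (fun _ _ _ => Subtype.ext <| by simp [mul_add]) (fun _ _ _ => Subtype.ext <| by simp))
    fun x y => Subtype.ext <| mul_comm_of_even even_two (α x).2.1 (α y).2.1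

@[simp]
theorem coe_cupSq_sqm (α : V →ₗ[ℚ] A.Z 2) (x y : V) :
    (cupSq α (sqm V x y) : A.carrier) = α x * α y :=
  congrArg Subtype.val (sqLift_sqm _ _ x y)

theorem cupSq_comp (α : W →ₗ[ℚ] A.Z 2) (φ : V →ₗ[ℚ] W) :
    cupSq (α ∘ₗ φ) = cupSq α ∘ₗ sqMap φ :=
  sqm_hom_ext fun x y => Subtype.ext <| by simp

/-- The map `P²V → A³`, `xy ↦ β(x)α(y) + β(y)α(x)`: up to coboundaries, the variation of a
primitive of `α²` when `α` varies by `dβ`. -/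
def polarize (β : V →ₗ[ℚ] A.grading 1) (α : V →ₗ[ℚ] A.Z 2) : SqM V →ₗ[ℚ] A.grading 3 :=
  sqLift
    (LinearMap.mk₂ ℚ (fun x y => ⟨β x * α y + β y * α x,
        add_mem (A.mul_mem (β x).2 (α y).2.1) (A.mul_mem (β y).2 (α x).2.1)⟩)
      (fun _ _ _ => Subtype.ext <| by simp [add_mul, mul_add]; abel)
      (fun _ _ _ => Subtype.ext <| by simp)
      (fun _ _ _ => Subtype.ext <| by simp [add_mul, mul_add]; abel)
      (fun _ _ _ => Subtype.ext <| by simp))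
    fun _ _ => Subtype.ext (add_comm _ _)

@[simp]
theorem coe_polarize_sqm (β : V →ₗ[ℚ] A.grading 1) (α : V →ₗ[ℚ] A.Z 2) (x y : V) :
    (polarize β α (sqm V x y) : A.carrier) = β x * α y + β y * α x :=
  congrArg Subtype.val (sqLift_sqm _ _ x y)

theorem polarize_add_smul (β : V →ₗ[ℚ] A.grading 1) (α α' : V →ₗ[ℚ] A.Z 2) (s : ℚ) :
    polarize β (α + s • α') = polarize β α + s • polarize β α' :=
  sqm_hom_ext fun x y => Subtype.ext <| by
    simp only [LinearMap.add_apply, LinearMap.smul_apply, Submodule.coe_add, Submodule.coe_smul,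
      coe_polarize_sqm, mul_add, mul_smul_comm, smul_add]
    abel

theorem d_polarize_sqm (β : V →ₗ[ℚ] A.grading 1) (α : V →ₗ[ℚ] A.Z 2) (x y : V) :
    A.d (polarize β α (sqm V x y)) = A.d (β x) * α y + A.d (β y) * α x := by
  rw [coe_polarize_sqm, map_add, d_mul_of_odd odd_one (β x).2, d_mul_of_odd odd_one (β y).2,
    d_Z, d_Z, mul_zero, mul_zero, sub_zero, sub_zero]

theorem coe_cupSq_add_smul_coboundary (α : V →ₗ[ℚ] A.Z 2) (β : V →ₗ[ℚ] A.grading 1) (s : ℚ)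
    (u : SqM V) :
    (cupSq (α + s • coboundary β) u : A.carrier) = cupSq α u
      + A.d (s • polarize β α u + s ^ 2 • (1 / 2 : ℚ) • polarize β (coboundary β) u) := by
  have hlin : (A.Z 4).subtype ∘ₗ cupSq (α + s • coboundary β) = (A.Z 4).subtype ∘ₗ cupSq α
      + A.d ∘ₗ (A.grading 3).subtype ∘ₗ
        (s • polarize β α + s ^ 2 • (1 / 2 : ℚ) • polarize β (coboundary β)) :=
    sqm_hom_ext fun x y => by
      have hα : (α x : A.carrier) * A.d (β y) = A.d (β y) * α x :=
        mul_comm_of_even even_two (α x).2.1 (A.d_mem (β y).2)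
      have hβ : A.d (β y) * A.d (β x) = A.d (β x) * A.d (β y) :=
        mul_comm_of_even even_two (A.d_mem (β y).2) (A.d_mem (β x).2)
      simp only [LinearMap.add_apply, LinearMap.smul_apply, LinearMap.comp_apply,
        Submodule.subtype_apply, Submodule.coe_add, Submodule.coe_smul, coe_cupSq_sqm,
        coe_coboundary, map_add, map_smul, d_polarize_sqm, add_mul, mul_add, smul_mul_assoc,
        mul_smul_comm, hα, hβ]
      module
  exact LinearMap.congr_fun hlin u

/-- The map `P³V → A⁶`, `x · u ↦ α(x) α²(u)`. -/
def cupCub (α : V →ₗ[ℚ] A.Z 2) : CubM V →ₗ[ℚ] A.carrier :=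
  cubLift ((LinearMap.mul ℚ A.carrier).compl₁₂ ((A.Z 2).subtype ∘ₗ α)
    ((A.Z 4).subtype ∘ₗ cupSq α)) fun x y w => by
      simp [← mul_assoc, mul_comm_of_even even_two (α x).2.1 (α y).2.1]

@[simp]
theorem cupCub_mulC (α : V →ₗ[ℚ] A.Z 2) (x : V) (u : SqM V) :
    cupCub α (mulC V x u) = α x * cupSq α u :=
  cubLift_mulC _ _ x u

/-- The map `P³V → A⁵`, `xyw ↦ β(x)α(y)α(w) + α(x)β(y)α(w) + α(x)α(y)β(w)`: the variation of a
primitive of `α³`. -/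
def polarizeCub (β : V →ₗ[ℚ] A.grading 1) (α : V →ₗ[ℚ] A.Z 2) : CubM V →ₗ[ℚ] A.carrier :=
  cubLift ((LinearMap.mul ℚ A.carrier).compl₁₂ ((A.Z 2).subtype ∘ₗ α)
      ((A.grading 3).subtype ∘ₗ polarize β α)
    + (LinearMap.mul ℚ A.carrier).compl₁₂ ((A.grading 1).subtype ∘ₗ β)
      ((A.Z 4).subtype ∘ₗ cupSq α)) fun x y w => by
    have hαβ (x y : V) : (α x : A.carrier) * β y = β y * α x :=
      mul_comm_of_even even_two (α x).2.1 (β y).2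
    have hαα : (α x : A.carrier) * α y = α y * α x := mul_comm_of_even even_two (α x).2.1 (α y).2.1
    simp only [LinearMap.add_apply, LinearMap.compl₁₂_apply, LinearMap.comp_apply,
      LinearMap.mul_apply', Submodule.subtype_apply, coe_polarize_sqm, coe_cupSq_sqm, mul_add,
      ← mul_assoc, hαβ]
    rw [mul_assoc (β w : A.carrier), mul_assoc (β w : A.carrier), hαα]
    abel

@[simp]
theorem polarizeCub_mulC (β : V →ₗ[ℚ] A.grading 1) (α : V →ₗ[ℚ] A.Z 2) (x : V) (u : SqM V) :
    polarizeCub β α (mulC V x u) = α x * polarize β α u + β x * cupSq α u :=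
  cubLift_mulC _ _ x u

/-- A cochain choice `(α, γ)`: cocycles `α(x)` of degree `2` and primitives `γ(e)` of `α²(e)`.
The families are indexed by a vector space `V` and a subspace `E ⊆ P²V`, so that choices can be
moved along linear maps; a cochain choice in the sense of the paper has `V = H²`,
`E = ker (P²H² → H⁴)` and `[α(x)] = x`. -/
structure CochainChoice (A : DGA) (E : Submodule ℚ (SqM V)) where
  /-- The family of cocycles. -/
  α : V →ₗ[ℚ] A.Z 2
  /-- The family of primitives. -/
  γ : E →ₗ[ℚ] A.grading 3
  d_γ : ∀ e, A.d (γ e) = (cupSq α e : A.carrier)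

namespace CochainChoice

variable {E : Submodule ℚ (SqM V)} {E' : Submodule ℚ (SqM W)}

/-- The pentagonal Massey tensor at the cochain level, `q ⊗ (e ∧ e') ↦ α(q)γ(e)γ(e')`. -/
def massey (c : A.CochainChoice E) : V ⊗[ℚ] AltM E →ₗ[ℚ] A.carrier :=
  mulAlt ((A.Z 2).subtype ∘ₗ c.α) ((A.grading 3).subtype ∘ₗ c.γ)
    fun e => mul_self_eq_zero_of_odd (by decide) (c.γ e).2

theorem massey_tmul_wdg (c : A.CochainChoice E) (q : V) (e e' : E) :
    c.massey (q ⊗ₜ wdg E e e') = c.α q * (c.γ e * c.γ e' : A.carrier) :=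
  mulAlt_tmul_wdg _ _ _ q e e'

theorem exists_massey_eq {α : V →ₗ[ℚ] A.Z 2} {αsq : SqM V →ₗ[ℚ] A.Z 4}
    (hαsq : ∀ (x y : V) (w : A.Z 4), (w : A.carrier) = (α x : A.carrier) * (α y : A.carrier) →
      αsq (sqm V x y) = w)
    {γ : E →ₗ[ℚ] A.carrier} (hγ : ∀ e, γ e ∈ A.grading 3)
    (hdγ : ∀ e : E, A.d (γ e) = (αsq (e : SqM V) : A.carrier))
    {Φ : V ⊗[ℚ] AltM E →ₗ[ℚ] A.carrier}
    (hΦ : ∀ q e e', Φ (q ⊗ₜ wdg E e e') = (α q : A.carrier) * (γ e * γ e')) :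
    ∃ c : A.CochainChoice E, c.α = α ∧ c.massey = Φ := by
  have hcup : αsq = cupSq α := sqm_hom_ext fun x y => hαsq x y _ (coe_cupSq_sqm α x y)
  exact ⟨⟨α, γ.codRestrict _ hγ, fun e => by rw [← hcup]; exact hdγ e⟩, rfl,
    tmul_wdg_hom_ext fun q e e' => (massey_tmul_wdg _ q e e').trans (hΦ q e e').symm⟩

theorem cup_sqMap_eq_zero (c : A.CochainChoice E) {cup : SqM (A.H 2) →ₗ[ℚ] A.H 4}
    (hcup : ∀ (x y : A.Z 2) (w : A.Z 4), (w : A.carrier) = (x : A.carrier) * (y : A.carrier) →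
      cup (sqm (A.H 2) (A.pr 2 x) (A.pr 2 y)) = A.pr 4 w)
    {u : SqM V} (hu : u ∈ E) : cup (sqMap (A.pr 2 ∘ₗ c.α) u) = 0 := by
  have hclass : cup ∘ₗ sqMap (A.pr 2 ∘ₗ c.α) = A.pr 4 ∘ₗ cupSq c.α :=
    sqm_hom_ext fun x y => by
      rw [LinearMap.comp_apply, sqMap_sqm]
      exact hcup _ _ _ (coe_cupSq_sqm c.α x y)
  exact (LinearMap.congr_fun hclass u).trans <|
    (pr_eq_zero_iff _).2 ⟨c.γ ⟨u, hu⟩, (c.γ ⟨u, hu⟩).2, c.d_γ ⟨u, hu⟩⟩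

section ChangeOfPrimitives

variable {c c' : A.CochainChoice E}

theorem exists_primitive_γ_sub_γ (h3 : ∀ x : A.H 3, x = 0) (hα : c.α = c'.α) :
    ∃ ζ : E →ₗ[ℚ] A.grading 2, ∀ e, A.d (ζ e) = (c'.γ e : A.carrier) - c.γ e :=
  exists_linear_primitive ((A.grading 3).subtype ∘ₗ (c'.γ - c.γ)) fun e =>
    mem_map_d_of_H_eq_zero h3
      ⟨(c'.γ e - c.γ e).2, LinearMap.mem_ker.2 <| by
        simp only [LinearMap.comp_apply, LinearMap.sub_apply, Submodule.subtype_apply,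
          map_sub, d_γ, hα, sub_self]⟩

/-- If `dζ = γ' - γ`, then up to `d(α(q)(ζ(e)γ'(e') - γ(e)ζ(e')))` the two Massey tensors differ by
`α(q)α²(e)ζ(e') - α(q)α²(e')ζ(e)`, which factors through `m`. -/
theorem massey_sub_massey_mem_of_α_eq (h3 : ∀ x : A.H 3, x = 0) (hα : c.α = c'.α)
    {t : V ⊗[ℚ] AltM E} (ht : t ∈ pentagonDomain E) :
    c'.massey t - c.massey t ∈ (A.grading 7).map A.d := by
  obtain ⟨ζ, hζ⟩ := exists_primitive_γ_sub_γ h3 hα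
  refine apply_mem_of_mem_pentagonDomain (L := c'.massey - c.massey) (cupCub c.α)
    ((A.grading 2).subtype ∘ₗ ζ) (fun q e e' => ?_) ht
  have hdeg : (ζ e * c'.γ e' - c.γ e * ζ e' : A.carrier) ∈ A.grading 5 :=
    sub_mem (A.mul_mem (i := 2) (j := 3) (ζ e).2 (c'.γ e').2)
      (A.mul_mem (i := 3) (j := 2) (c.γ e).2 (ζ e').2)
  refine ⟨c.α q * (ζ e * c'.γ e' - c.γ e * ζ e'), A.mul_mem (c.α q).2.1 hdeg, ?_⟩
  have hcomm : (cupSq c.α e' : A.carrier) * ζ e = ζ e * cupSq c.α e' :=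
    mul_comm_of_even (by decide) (cupSq c.α e').2.1 (ζ e).2
  simp only [d_mul_of_even even_two (c.α q).2.1, d_Z, zero_mul, zero_add, map_sub,
    d_mul_of_even even_two (ζ e).2, d_mul_of_odd (by decide : Odd 3) (c.γ e).2, hζ, d_γ, ← hα,
    LinearMap.sub_apply, massey_tmul_wdg, cupCub_mulC, LinearMap.comp_apply,
    Submodule.subtype_apply, mul_assoc, hcomm]
  noncomm_ring

end ChangeOfPrimitives

section ChangeOfCocycles

/-- The cochain choice obtained by moving `α` along the line `α + s dβ`; expanding `(α + s dβ)²`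
dictates the quadratic correction of `γ`. -/
def shift (c : A.CochainChoice E) (β : V →ₗ[ℚ] A.grading 1) (s : ℚ) : A.CochainChoice E where
  α := c.α + s • coboundary β
  γ := c.γ
    + (s • polarize β c.α + s ^ 2 • (1 / 2 : ℚ) • polarize β (coboundary β)) ∘ₗ E.subtype
  d_γ e := by
    rw [coe_cupSq_add_smul_coboundary, ← c.d_γ, ← map_add]
    rfl

/-- The derivative at `s = 0` of the Massey tensor of `c.shift β s`, evaluated on `q ⊗ (e ∧ e')`, is
`d(β(q)γ(e)γ(e'))` plus a term which factors through `m`. -/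
theorem variation_mem (c : A.CochainChoice E) (β : V →ₗ[ℚ] A.grading 1) (q : V) (e e' : E) :
    A.d (β q) * (c.γ e * c.γ e')
        + c.α q * (polarize β c.α e * c.γ e' + c.γ e * polarize β c.α e')
        - (polarizeCub β c.α (mulC V q e) * c.γ e' - polarizeCub β c.α (mulC V q e') * c.γ e)
      ∈ (A.grading 7).map A.d := by
  refine ⟨β q * (c.γ e * c.γ e'),
    A.mul_mem (β q).2 (A.mul_mem (c.γ e).2 (c.γ e').2), ?_⟩
  have hcup : (c.γ e : A.carrier) * cupSq c.α e' = cupSq c.α e' * c.γ e :=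
    (mul_comm_of_even (by decide) (cupSq c.α e').2.1 (c.γ e).2).symm
  have hη : (c.γ e : A.carrier) * polarize β c.α e' = -(polarize β c.α e' * c.γ e) :=
    mul_anticomm_of_odd (by decide) (by decide) (c.γ e).2 (polarize β c.α e').2
  rw [d_mul_of_odd odd_one (β q).2, d_mul_of_odd (by decide) (c.γ e).2, d_γ, d_γ, hcup, hη,
    polarizeCub_mulC, polarizeCub_mulC]
  noncomm_ring

open Polynomial

/-- The Massey tensor of `c.shift β s` as a polynomial in `s`. -/
def masseyCurve (c : A.CochainChoice E) (β : V →ₗ[ℚ] A.grading 1) :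
    V ⊗[ℚ] AltM E →ₗ[ℚ] A.carrier[X] :=
  mulAlt (quadraticCurve ((A.Z 2).subtype ∘ₗ c.α) (A.d ∘ₗ (A.grading 1).subtype ∘ₗ β) 0)
    (quadraticCurve ((A.grading 3).subtype ∘ₗ c.γ)
      ((A.grading 3).subtype ∘ₗ polarize β c.α ∘ₗ E.subtype)
      ((A.grading 3).subtype ∘ₗ ((1 / 2 : ℚ) • polarize β (coboundary β)) ∘ₗ E.subtype))
    fun e => polynomial_mul_self_eq_zero_of_odd (by decide) <|
      coeff_quadraticCurve_mem (c.γ e).2 (polarize β c.α e).2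
        ((1 / 2 : ℚ) • polarize β (coboundary β) (e : SqM V)).2

theorem evalScalar_masseyCurve (c : A.CochainChoice E) (β : V →ₗ[ℚ] A.grading 1) (s : ℚ)
    (t : V ⊗[ℚ] AltM E) : evalScalar s (c.masseyCurve β t) = (c.shift β s).massey t := by
  have hlin : (evalScalar s).toLinearMap ∘ₗ c.masseyCurve β = (c.shift β s).massey :=
    tmul_wdg_hom_ext fun q e e' => by
      simp [masseyCurve, mulAlt_tmul_wdg, massey_tmul_wdg, evalScalar_quadraticCurve, shift,
        add_assoc]
  exact LinearMap.congr_fun hlin t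

theorem evalScalar_derivative_masseyCurve (c : A.CochainChoice E) (β : V →ₗ[ℚ] A.grading 1) (s : ℚ)
    (q : V) (e e' : E) :
    evalScalar s (derivative (c.masseyCurve β (q ⊗ₜ wdg E e e')))
      = A.d (β q) * ((c.shift β s).γ e * (c.shift β s).γ e')
        + (c.shift β s).α q * (polarize β (c.shift β s).α e * (c.shift β s).γ e'
          + (c.shift β s).γ e * polarize β (c.shift β s).α e') := by
  have hs : 2 * s * 2⁻¹ = s := by ring
  simp [masseyCurve, mulAlt_tmul_wdg, derivative_mul, evalScalar_quadraticCurve,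
    evalScalar_derivative_quadraticCurve, shift, polarize_add_smul, smul_smul, add_assoc, hs]

theorem shift_one_massey_sub_massey_mem (c : A.CochainChoice E) (β : V →ₗ[ℚ] A.grading 1)
    {t : V ⊗[ℚ] AltM E} (ht : t ∈ pentagonDomain E) :
    (c.shift β 1).massey t - c.massey t ∈ (A.grading 7).map A.d := by
  have hderiv (s : ℚ) :
      evalScalar s (derivative (c.masseyCurve β t)) ∈ (A.grading 7).map A.d := by
    refine apply_mem_of_mem_pentagonDomain
      (L := (evalScalar s).toLinearMap ∘ₗ derivative.restrictScalars ℚ ∘ₗ c.masseyCurve β)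
      (polarizeCub β (c.shift β s).α) ((A.grading 3).subtype ∘ₗ (c.shift β s).γ)
      (fun q e e' => ?_) ht
    have hvar := (c.shift β s).variation_mem β q e e'
    rwa [← c.evalScalar_derivative_masseyCurve β s q e e'] at hvar
  have hzero : c.shift β 0 = c := by
    cases c
    simp [shift]
  have hends := evalScalar_one_sub_evalScalar_zero_mem hderiv
  rwa [evalScalar_masseyCurve, evalScalar_masseyCurve, hzero] at hends

end ChangeOfCocycles

theorem massey_sub_massey_mem (h3 : ∀ x : A.H 3, x = 0) {c c' : A.CochainChoice E}
    (hpr : ∀ x, A.pr 2 (c.α x) = A.pr 2 (c'.α x)) {t : V ⊗[ℚ] AltM E}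
    (ht : t ∈ pentagonDomain E) : c'.massey t - c.massey t ∈ (A.grading 7).map A.d := by
  obtain ⟨β, hβ⟩ := exists_linear_primitive (i := 1) ((A.Z 2).subtype ∘ₗ (c'.α - c.α)) fun x =>
    (pr_eq_zero_iff ((c'.α - c.α) x)).1 (by rw [LinearMap.sub_apply, map_sub, hpr, sub_self])
  have hα : (c.shift β 1).α = c'.α := LinearMap.ext fun x => Subtype.ext <| by
    simp [shift, hβ]
  have hsum := add_mem (massey_sub_massey_mem_of_α_eq h3 hα ht)
    (c.shift_one_massey_sub_massey_mem β ht)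
  rwa [sub_add_sub_cancel] at hsum

end CochainChoice

/-- A morphism of DGAs. -/
structure Hom (A B : DGA) where
  /-- The underlying algebra homomorphism. -/
  toAlgHom : A.carrier →ₐ[ℚ] B.carrier
  map_d : ∀ a, toAlgHom (A.d a) = B.d (toAlgHom a)
  map_mem : ∀ i, ∀ a ∈ A.grading i, toAlgHom a ∈ B.grading i

namespace Hom

/-- The restriction of a morphism to closed elements of degree `i`. -/
def mapZ (f : Hom A B) (i : ℕ) : A.Z i →ₗ[ℚ] B.Z i :=
  f.toAlgHom.toLinearMap.restrict fun a ha => ⟨f.map_mem i a ha.1, LinearMap.mem_ker.2 <| by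
    rw [AlgHom.toLinearMap_apply, ← f.map_d, LinearMap.mem_ker.1 ha.2, map_zero]⟩

@[simp]
theorem coe_mapZ (f : Hom A B) (z : A.Z i) : (f.mapZ i z : B.carrier) = f.toAlgHom z :=
  rfl

theorem coe_cupSq_mapZ_comp (f : Hom A B) (α : V →ₗ[ℚ] A.Z 2) (u : SqM V) :
    (cupSq (f.mapZ 2 ∘ₗ α) u : B.carrier) = f.toAlgHom (cupSq α u) := by
  have hlin : (B.Z 4).subtype ∘ₗ cupSq (f.mapZ 2 ∘ₗ α)
      = f.toAlgHom.toLinearMap ∘ₗ (A.Z 4).subtype ∘ₗ cupSq α := sqm_hom_ext fun x y => by simp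
  exact LinearMap.congr_fun hlin u

end Hom

namespace CochainChoice

variable {E : Submodule ℚ (SqM V)} {E' : Submodule ℚ (SqM W)}

/-- The image of a cochain choice under a morphism of DGAs. -/
def map (f : Hom A B) (c : A.CochainChoice E) : B.CochainChoice E where
  α := f.mapZ 2 ∘ₗ c.α
  γ := f.toAlgHom.toLinearMap.restrict (f.map_mem 3) ∘ₗ c.γ
  d_γ e := by
    rw [f.coe_cupSq_mapZ_comp, ← c.d_γ, f.map_d]
    rfl

theorem massey_map (f : Hom A B) (c : A.CochainChoice E) (t : V ⊗[ℚ] AltM E) :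
    (c.map f).massey t = f.toAlgHom (c.massey t) := by
  have hlin : (c.map f).massey = f.toAlgHom.toLinearMap ∘ₗ c.massey :=
    tmul_wdg_hom_ext fun q e e' => by
      rw [LinearMap.comp_apply, massey_tmul_wdg, massey_tmul_wdg, AlgHom.toLinearMap_apply,
        map_mul, map_mul]
      rfl
  exact LinearMap.congr_fun hlin t

/-- The restriction of a cochain choice along a linear map of index spaces. -/
def comap (c : A.CochainChoice E') (φ : V →ₗ[ℚ] W) (hφ : ∀ u ∈ E, sqMap φ u ∈ E') :
    A.CochainChoice E where
  α := c.α ∘ₗ φ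
  γ := c.γ ∘ₗ (sqMap φ).restrict hφ
  d_γ e := by
    rw [cupSq_comp]
    exact c.d_γ _

theorem massey_comap (c : A.CochainChoice E') (φ : V →ₗ[ℚ] W) (hφ : ∀ u ∈ E, sqMap φ u ∈ E')
    (t : V ⊗[ℚ] AltM E) : (c.comap φ hφ).massey t
      = c.massey (TensorProduct.map φ (altMap ((sqMap φ).restrict hφ)) t) := by
  have hlin : (c.comap φ hφ).massey
      = c.massey ∘ₗ TensorProduct.map φ (altMap ((sqMap φ).restrict hφ)) :=
    tmul_wdg_hom_ext fun q e e' => by simp [massey_tmul_wdg, comap]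
  exact LinearMap.congr_fun hlin t

theorem map_massey_sub_massey_mem (f : Hom A B) (h3 : ∀ x : B.H 3, x = 0)
    {φ : V →ₗ[ℚ] W} (hφ : ∀ u ∈ E, sqMap φ u ∈ E') {c : A.CochainChoice E}
    {c' : B.CochainChoice E'} (hpr : ∀ x, B.pr 2 (c'.α (φ x)) = B.pr 2 (f.mapZ 2 (c.α x)))
    {t : V ⊗[ℚ] AltM E} (ht : t ∈ pentagonDomain E) :
    f.toAlgHom (c.massey t)
        - c'.massey (TensorProduct.map φ (altMap ((sqMap φ).restrict hφ)) t)
      ∈ (B.grading 7).map B.d := by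
  rw [← massey_map, ← massey_comap]
  exact massey_sub_massey_mem h3 hpr ht

end CochainChoice

end DGA

theorem P_quasi_iso_invariant_general (A B : DGA)
    (h3B : ∀ x : B.H 3, x = 0)
    (f : A.carrier →ₐ[ℚ] B.carrier)
    (hfd : ∀ a : A.carrier, f (A.d a) = B.d (f a))
    (hfgr : ∀ (i : ℕ) (a : A.carrier), a ∈ A.grading i → f a ∈ B.grading i)
    (f2 : A.H 2 →ₗ[ℚ] B.H 2)
    (hf2 : ∀ (x : A.Z 2) (y : B.Z 2),
      (y : B.carrier) = f (x : A.carrier) → f2 (A.pr 2 x) = B.pr 2 y)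
    (cupA : SqM (A.H 2) →ₗ[ℚ] A.H 4)
    (hcupA : ∀ (x y : A.Z 2) (w : A.Z 4),
      (w : A.carrier) = (x : A.carrier) * (y : A.carrier) →
      cupA (sqm (A.H 2) (A.pr 2 x) (A.pr 2 y)) = A.pr 4 w)
    (cupB : SqM (B.H 2) →ₗ[ℚ] B.H 4)
    (hcupB : ∀ (x y : B.Z 2) (w : B.Z 4),
      (w : B.carrier) = (x : B.carrier) * (y : B.carrier) →
      cupB (sqm (B.H 2) (B.pr 2 x) (B.pr 2 y)) = B.pr 4 w)
    (mA : (A.H 2 ⊗[ℚ] AltM (SqM (A.H 2))) →ₗ[ℚ] (CubM (A.H 2) ⊗[ℚ] SqM (A.H 2)))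
    (hmA : ∀ (q : A.H 2) (u v : SqM (A.H 2)),
      mA (q ⊗ₜ[ℚ] wdg (SqM (A.H 2)) u v)
        = mulC (A.H 2) q u ⊗ₜ[ℚ] v - mulC (A.H 2) q v ⊗ₜ[ℚ] u)
    (ιA : (A.H 2 ⊗[ℚ] AltM ↥(LinearMap.ker cupA)) →ₗ[ℚ] (A.H 2 ⊗[ℚ] AltM (SqM (A.H 2))))
    (hιA : ∀ (q : A.H 2) (e e' : ↥(LinearMap.ker cupA)),
      ιA (q ⊗ₜ[ℚ] wdg ↥(LinearMap.ker cupA) e e')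
        = q ⊗ₜ[ℚ] wdg (SqM (A.H 2)) (e : SqM (A.H 2)) (e' : SqM (A.H 2)))
    (ιB : (B.H 2 ⊗[ℚ] AltM ↥(LinearMap.ker cupB)) →ₗ[ℚ] (B.H 2 ⊗[ℚ] AltM (SqM (B.H 2))))
    (hιB : ∀ (q : B.H 2) (e e' : ↥(LinearMap.ker cupB)),
      ιB (q ⊗ₜ[ℚ] wdg ↥(LinearMap.ker cupB) e e')
        = q ⊗ₜ[ℚ] wdg (SqM (B.H 2)) (e : SqM (B.H 2)) (e' : SqM (B.H 2)))
    (F : (A.H 2 ⊗[ℚ] AltM (SqM (A.H 2))) →ₗ[ℚ] (B.H 2 ⊗[ℚ] AltM (SqM (B.H 2))))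
    (hF : ∀ q x y z w : A.H 2,
      F (q ⊗ₜ[ℚ] wdg (SqM (A.H 2)) (sqm (A.H 2) x y) (sqm (A.H 2) z w))
        = f2 q ⊗ₜ[ℚ] wdg (SqM (B.H 2)) (sqm (B.H 2) (f2 x) (f2 y))
            (sqm (B.H 2) (f2 z) (f2 w)))
    (αA : A.H 2 →ₗ[ℚ] A.Z 2) (hαA : ∀ h, A.pr 2 (αA h) = h)
    (αsqA : SqM (A.H 2) →ₗ[ℚ] A.Z 4)
    (hαsqA : ∀ (x y : A.H 2) (w : A.Z 4),
      (w : A.carrier) = (αA x : A.carrier) * (αA y : A.carrier) →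
      αsqA (sqm (A.H 2) x y) = w)
    (γA : ↥(LinearMap.ker cupA) →ₗ[ℚ] A.carrier)
    (hγAmem : ∀ e, γA e ∈ A.grading 3)
    (hγAd : ∀ e : ↥(LinearMap.ker cupA), A.d (γA e) = (αsqA (e : SqM (A.H 2)) : A.carrier))
    (ΦA : (A.H 2 ⊗[ℚ] AltM ↥(LinearMap.ker cupA)) →ₗ[ℚ] A.carrier)
    (hΦA : ∀ (q : A.H 2) (e e' : ↥(LinearMap.ker cupA)),
      ΦA (q ⊗ₜ[ℚ] wdg ↥(LinearMap.ker cupA) e e') = (αA q : A.carrier) * (γA e * γA e'))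
    (αB : B.H 2 →ₗ[ℚ] B.Z 2) (hαB : ∀ h, B.pr 2 (αB h) = h)
    (αsqB : SqM (B.H 2) →ₗ[ℚ] B.Z 4)
    (hαsqB : ∀ (x y : B.H 2) (w : B.Z 4),
      (w : B.carrier) = (αB x : B.carrier) * (αB y : B.carrier) →
      αsqB (sqm (B.H 2) x y) = w)
    (γB : ↥(LinearMap.ker cupB) →ₗ[ℚ] B.carrier)
    (hγBmem : ∀ e, γB e ∈ B.grading 3)
    (hγBd : ∀ e : ↥(LinearMap.ker cupB), B.d (γB e) = (αsqB (e : SqM (B.H 2)) : B.carrier))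
    (ΦB : (B.H 2 ⊗[ℚ] AltM ↥(LinearMap.ker cupB)) →ₗ[ℚ] B.carrier)
    (hΦB : ∀ (q : B.H 2) (e e' : ↥(LinearMap.ker cupB)),
      ΦB (q ⊗ₜ[ℚ] wdg ↥(LinearMap.ker cupB) e e')
        = (αB q : B.carrier) * (γB e * γB e')) :
    ∀ (tA : A.H 2 ⊗[ℚ] AltM ↥(LinearMap.ker cupA))
      (tB : B.H 2 ⊗[ℚ] AltM ↥(LinearMap.ker cupB)),
      mA (ιA tA) = 0 → ιB tB = F (ιA tA) →
      f (ΦA tA) - ΦB tB ∈ Submodule.map B.d (B.grading 7) := by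
  intro tA tB htA htB
  let f' : DGA.Hom A B := ⟨f, hfd, hfgr⟩
  obtain ⟨cA, rfl, rfl⟩ := DGA.CochainChoice.exists_massey_eq hαsqA hγAmem hγAd hΦA
  obtain ⟨cB, rfl, rfl⟩ := DGA.CochainChoice.exists_massey_eq hαsqB hγBmem hγBd hΦB
  have hclass (x : A.H 2) : f2 x = B.pr 2 (f'.mapZ 2 (cA.α x)) := by
    rw [← hf2 (cA.α x) _ rfl, hαA]
  have hker (u : SqM (A.H 2)) (hu : u ∈ LinearMap.ker cupA) : sqMap f2 u ∈ LinearMap.ker cupB := by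
    rw [show f2 = B.pr 2 ∘ₗ (cA.map f').α from LinearMap.ext hclass]
    exact (cA.map f').cup_sqMap_eq_zero hcupB hu
  rw [eq_map_altMap_restrict_of_apply_eq hker hιA hιB hF htB]
  exact DGA.CochainChoice.map_massey_sub_massey_mem f' h3B hker
    (fun x => (hαB (f2 x)).trans (hclass x)) ((mem_pentagonDomain_iff hmA hιA).2 htA)

/-- **Remark 2.9.** Let `f : A → B` be a morphism of DGAs over `ℚ` with
`H³(A) = H³(B) = 0` and with `H²(f)` an isomorphism. Then the (choice-independent)
pentagonal Massey tensors satisfy `H⁸(f) ∘ 𝒫_A = 𝒫_B ∘ (D_A → D_B)`: for all cochain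
choices on `A` and on `B` and every `t ∈ D_A`, the element `f(α_Aγ_A²(t))` and the value
of `α_Bγ_B²` on the image of `t` under `H²(f) ⊗ Λ²(P²H²(f))` differ by an exact element. -/
theorem P_quasi_iso_invariant (A B : DGA)
    (h3A : ∀ x : A.H 3, x = 0) (h3B : ∀ x : B.H 3, x = 0)
    (f : A.carrier →ₐ[ℚ] B.carrier)
    (hfd : ∀ a : A.carrier, f (A.d a) = B.d (f a))
    (hfgr : ∀ (i : ℕ) (a : A.carrier), a ∈ A.grading i → f a ∈ B.grading i)
    (f2 : A.H 2 →ₗ[ℚ] B.H 2)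
    (hf2 : ∀ (x : A.Z 2) (y : B.Z 2),
      (y : B.carrier) = f (x : A.carrier) → f2 (A.pr 2 x) = B.pr 2 y)
    (hf2bij : Function.Bijective f2)
    (cupA : SqM (A.H 2) →ₗ[ℚ] A.H 4)
    (hcupA : ∀ (x y : A.Z 2) (w : A.Z 4),
      (w : A.carrier) = (x : A.carrier) * (y : A.carrier) →
      cupA (sqm (A.H 2) (A.pr 2 x) (A.pr 2 y)) = A.pr 4 w)
    (cupB : SqM (B.H 2) →ₗ[ℚ] B.H 4)
    (hcupB : ∀ (x y : B.Z 2) (w : B.Z 4),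
      (w : B.carrier) = (x : B.carrier) * (y : B.carrier) →
      cupB (sqm (B.H 2) (B.pr 2 x) (B.pr 2 y)) = B.pr 4 w)
    (mA : (A.H 2 ⊗[ℚ] AltM (SqM (A.H 2))) →ₗ[ℚ] (CubM (A.H 2) ⊗[ℚ] SqM (A.H 2)))
    (hmA : ∀ (q : A.H 2) (u v : SqM (A.H 2)),
      mA (q ⊗ₜ[ℚ] wdg (SqM (A.H 2)) u v)
        = mulC (A.H 2) q u ⊗ₜ[ℚ] v - mulC (A.H 2) q v ⊗ₜ[ℚ] u)
    (ιA : (A.H 2 ⊗[ℚ] AltM ↥(LinearMap.ker cupA)) →ₗ[ℚ] (A.H 2 ⊗[ℚ] AltM (SqM (A.H 2))))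
    (hιA : ∀ (q : A.H 2) (e e' : ↥(LinearMap.ker cupA)),
      ιA (q ⊗ₜ[ℚ] wdg ↥(LinearMap.ker cupA) e e')
        = q ⊗ₜ[ℚ] wdg (SqM (A.H 2)) (e : SqM (A.H 2)) (e' : SqM (A.H 2)))
    (ιB : (B.H 2 ⊗[ℚ] AltM ↥(LinearMap.ker cupB)) →ₗ[ℚ] (B.H 2 ⊗[ℚ] AltM (SqM (B.H 2))))
    (hιB : ∀ (q : B.H 2) (e e' : ↥(LinearMap.ker cupB)),
      ιB (q ⊗ₜ[ℚ] wdg ↥(LinearMap.ker cupB) e e')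
        = q ⊗ₜ[ℚ] wdg (SqM (B.H 2)) (e : SqM (B.H 2)) (e' : SqM (B.H 2)))
    (F : (A.H 2 ⊗[ℚ] AltM (SqM (A.H 2))) →ₗ[ℚ] (B.H 2 ⊗[ℚ] AltM (SqM (B.H 2))))
    (hF : ∀ q x y z w : A.H 2,
      F (q ⊗ₜ[ℚ] wdg (SqM (A.H 2)) (sqm (A.H 2) x y) (sqm (A.H 2) z w))
        = f2 q ⊗ₜ[ℚ] wdg (SqM (B.H 2)) (sqm (B.H 2) (f2 x) (f2 y))
            (sqm (B.H 2) (f2 z) (f2 w)))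
    (αA : A.H 2 →ₗ[ℚ] A.Z 2) (hαA : ∀ h, A.pr 2 (αA h) = h)
    (αsqA : SqM (A.H 2) →ₗ[ℚ] A.Z 4)
    (hαsqA : ∀ (x y : A.H 2) (w : A.Z 4),
      (w : A.carrier) = (αA x : A.carrier) * (αA y : A.carrier) →
      αsqA (sqm (A.H 2) x y) = w)
    (γA : ↥(LinearMap.ker cupA) →ₗ[ℚ] A.carrier)
    (hγAmem : ∀ e, γA e ∈ A.grading 3)
    (hγAd : ∀ e : ↥(LinearMap.ker cupA), A.d (γA e) = (αsqA (e : SqM (A.H 2)) : A.carrier))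
    (ΦA : (A.H 2 ⊗[ℚ] AltM ↥(LinearMap.ker cupA)) →ₗ[ℚ] A.carrier)
    (hΦA : ∀ (q : A.H 2) (e e' : ↥(LinearMap.ker cupA)),
      ΦA (q ⊗ₜ[ℚ] wdg ↥(LinearMap.ker cupA) e e') = (αA q : A.carrier) * (γA e * γA e'))
    (αB : B.H 2 →ₗ[ℚ] B.Z 2) (hαB : ∀ h, B.pr 2 (αB h) = h)
    (αsqB : SqM (B.H 2) →ₗ[ℚ] B.Z 4)
    (hαsqB : ∀ (x y : B.H 2) (w : B.Z 4),
      (w : B.carrier) = (αB x : B.carrier) * (αB y : B.carrier) →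
      αsqB (sqm (B.H 2) x y) = w)
    (γB : ↥(LinearMap.ker cupB) →ₗ[ℚ] B.carrier)
    (hγBmem : ∀ e, γB e ∈ B.grading 3)
    (hγBd : ∀ e : ↥(LinearMap.ker cupB), B.d (γB e) = (αsqB (e : SqM (B.H 2)) : B.carrier))
    (ΦB : (B.H 2 ⊗[ℚ] AltM ↥(LinearMap.ker cupB)) →ₗ[ℚ] B.carrier)
    (hΦB : ∀ (q : B.H 2) (e e' : ↥(LinearMap.ker cupB)),
      ΦB (q ⊗ₜ[ℚ] wdg ↥(LinearMap.ker cupB) e e')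
        = (αB q : B.carrier) * (γB e * γB e')) :
    ∀ (tA : A.H 2 ⊗[ℚ] AltM ↥(LinearMap.ker cupA))
      (tB : B.H 2 ⊗[ℚ] AltM ↥(LinearMap.ker cupB)),
      mA (ιA tA) = 0 → ιB tB = F (ιA tA) →
      f (ΦA tA) - ΦB tB ∈ Submodule.map B.d (B.grading 7) := by
  exact P_quasi_iso_invariant_general A B h3B f hfd hfgr f2 hf2 cupA hcupA cupB hcupB mA hmA ιA hιA
    ιB hιB F hF αA hαA αsqA hαsqA γA hγAmem hγAd ΦA hΦA αB hαB αsqB hαsqB γB hγBmem hγBd ΦB hΦB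

end
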